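/- Let n ≥ 0, let x_1, …, x_n ∈ (0,1) be pairwise distinct and solve the algebraic system E^n_{4,9,12}, i.e. 4/x_i + 9/(x_i − 1) + Σ_{j≠i} 12/(x_j − x_i) = 0 for all 1 ≤ i ≤ n, and let w_1, …, w_n ∈ ℍ satisfy J(w_i) = x_i. Define f(τ) = η(τ)^4 / ( (J(τ) − 1) ∏_{i=1}^n (J(τ) − x_i)² ). Then: (1) f is holomorphic and nonvanishing at every τ ∈ ℍ with J(τ) ∉ {1, x_1, …, x_n}; (2) f has double poles with zero residues at τ = i and at each w_i, i.e. the limit as τ → w (τ ≠ w) of (d/dτ)[(τ − w)² f(τ)] is 0 for w = i and for each w = w_i; (3) for every τ ∈ ℍ with J(τ) ∉ {1, x_1, …, x_n}, one has (d/dτ)(f'(τ)/f(τ)) − (1/2)(f'(τ)/f(τ))² = 2π² ((12n+7)/6)² E4(τ); equivalently, any primitive h of f satisfies {h, τ} = 2π² (12n+7)²/36 · E4(τ). -/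

import Mathlib

open Complex Filter Topology

noncomputable section

/-- The nome `q = e^{2πiτ}`. -/
def qq (τ : ℂ) : ℂ := Complex.exp (2 * Real.pi * Complex.I * τ)

/-- The Eisenstein series `E₄(τ) = 1 + 240 Σ_{n≥1} σ₃(n) qⁿ`. -/
def E4 (τ : ℂ) : ℂ := 1 + 240 * ∑' n : ℕ, (∑ d ∈ (n + 1).divisors, (d : ℂ) ^ 3) * qq τ ^ (n + 1)

/-- The Eisenstein series `E₆(τ) = 1 − 504 Σ_{n≥1} σ₅(n) qⁿ`. -/
def E6 (τ : ℂ) : ℂ := 1 - 504 * ∑' n : ℕ, (∑ d ∈ (n + 1).divisors, (d : ℂ) ^ 5) * qq τ ^ (n + 1)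

/-- The normalized elliptic modular function `J = E₄³ / (E₄³ − E₆²)`. -/
def J (τ : ℂ) : ℂ := E4 τ ^ 3 / (E4 τ ^ 3 - E6 τ ^ 2)

/-- The Dedekind eta function `η(τ) = e^{πiτ/12} ∏_{n≥1} (1 − qⁿ)`. -/
def dedekindEta (τ : ℂ) : ℂ := Complex.exp (Real.pi * Complex.I * τ / 12) * ∏' n : ℕ, (1 - qq τ ^ (n + 1))

/-- The elliptic point `ρ = e^{2πi/3}`. -/
def rho : ℂ := Complex.exp (2 * Real.pi * Complex.I / 3)

/-- `f = η⁴ / ((J−1)·∏ᵢ(J−xᵢ)²)` where the `xᵢ ∈ (0,1)` solve the system `E^n_{4,9,12}`. -/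
def f7 (n : ℕ) (x : Fin n → ℝ) (z : ℂ) : ℂ :=
  dedekindEta z ^ 4 / ((J z - 1) * ∏ i, (J z - (x i : ℂ)) ^ 2)

/-! Since `J - 1 = E₆² / (1728 η²⁴)`, one has `f = 1728 / u²` for the holomorphic function
`u = E₆ P(J) / η¹⁴` of weight `-1`, where `P = ∏ (X - xᵢ)`. By Heine and Stieltjes, the algebraic
system says that `P` solves the hypergeometric equation
`X (X - 1) P'' + (13 X / 6 - 2 / 3) P' = n (6 n + 7) / 6 P`. Taking Serre derivatives twice with
Ramanujan's formulas, and using Bol's identity in weight `-1`, this equation becomes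
`u'' = (2πi)² ((12 n + 7) / 12)² E₄ u`. The Schwarz derivative of a primitive of `f` is
`-2 u'' / u`. At a zero of `u` the equation gives `u'' = 0`; since the zero is simple, the residue
of `1 / u²` vanishes. -/

section Ramanujan

open UpperHalfPlane hiding I J
open ModularForm EisensteinSeries Derivative Function
open scoped Manifold MatrixGroups Real

local notation "𝕢" => Periodic.qParam

section QExpansion

lemma hasSum_qParam_E2 (τ : ℍ) :
    HasSum (fun m : ℕ ↦ (if m = 0 then 1 else -24 * ArithmeticFunction.sigma 1 m : ℂ) • 𝕢 1 τ ^ m)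
      (E2 τ) := by
  simpa only [Periodic.qParam, ofReal_one, div_one] using hasSum_qExpansion_E2 (z := τ)

variable {F : ℍ → ℂ} {h : ℝ} {c : ℕ → ℂ}

lemma periodic_comp_ofComplex_of_hasSum_qExpansion (hh : h ≠ 0)
    (hF : ∀ τ : ℍ, HasSum (fun m ↦ c m • 𝕢 h τ ^ m) (F τ)) : Periodic (F ∘ ofComplex) h := by
  intro z
  by_cases! hz : 0 < z.im
  · have hz' : 0 < (z + h).im := by simpa using hz
    have hq : 𝕢 h (z + h) = 𝕢 h z := by
      have := ofReal_ne_zero.mpr hh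
      rw [Periodic.qParam, mul_add, add_div, mul_div_cancel_right₀ _ this, exp_add,
        exp_two_pi_mul_I, mul_one, Periodic.qParam]
    have hsum := hF ⟨z + h, hz'⟩
    simp only [hq] at hsum
    simpa [ofComplex_apply_of_im_pos, hz, hz'] using hsum.unique (hF ⟨z, hz⟩)
  · simp [ofComplex_apply_of_im_nonpos, hz]

lemma tendsto_atImInfty_of_hasSum_qExpansion (hh : 0 < h) (hhol : MDiff F)
    (hF : ∀ τ : ℍ, HasSum (fun m ↦ c m • 𝕢 h τ ^ m) (F τ)) :
    Tendsto F atImInfty (𝓝 (c 0)) := by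
  have hper := periodic_comp_ofComplex_of_hasSum_qExpansion hh.ne' hF
  have han := analyticAt_cuspFunction_zero hh hper hhol
    (isBoundedAtImInfty_of_hasSum_qExpansion hh hF)
  have hzero : cuspFunction h F 0 = c 0 := by
    rw [← (hasFPowerSeriesOnBall_cuspFunction hh han hF).coeff_zero 0]
    simp [FormalMultilinearSeries.ofScalars]
  rw [← hzero]
  exact (han.continuousAt.tendsto.comp (qParam_tendsto_atImInfty hh)).congr
    fun τ ↦ eq_cuspFunction τ hh.ne' hper

lemma normalizedDerivOfComplex_eq_qParam_mul_deriv (hh : 0 < h)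
    (hper : Periodic (F ∘ ofComplex) h) (hhol : MDiff F) (hbdd : IsBoundedAtImInfty F) (τ : ℍ) :
    D F τ = 𝕢 h τ / h * deriv (cuspFunction h F) (𝕢 h τ) := by
  have hg := (differentiableAt_cuspFunction hh hper hhol hbdd
    (Periodic.norm_qParam_lt_one hh τ.im_pos)).hasDerivAt
  have hq : HasDerivAt (𝕢 h) (𝕢 h τ * (2 * π * Complex.I / h)) τ :=
    (((hasDerivAt_id (τ : ℂ)).const_mul (2 * π * Complex.I)).div_const (h : ℂ)).cexp.congr_deriv
      (by simp [Periodic.qParam])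
  have heq : F ∘ ofComplex = cuspFunction h F ∘ 𝕢 h :=
    funext fun z ↦ (Periodic.eq_cuspFunction hh.ne' hper z).symm
  have := ofReal_ne_zero.mpr hh.ne'
  rw [normalizedDerivOfComplex, heq, (hg.comp (τ : ℂ) hq).deriv]
  field_simp

lemma tendsto_normalizedDerivOfComplex_atImInfty (hh : 0 < h) (hper : Periodic (F ∘ ofComplex) h)
    (hhol : MDiff F) (hbdd : IsBoundedAtImInfty F) : Tendsto (D F) atImInfty (𝓝 0) := by
  have hq := qParam_tendsto_atImInfty hh
  have hg := (analyticAt_cuspFunction_zero hh hper hhol hbdd).deriv.continuousAt.tendsto.comp hq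
  have hlim := (hq.div_const (h : ℂ)).mul hg
  rw [zero_div, zero_mul] at hlim
  exact hlim.congr fun τ ↦
    (normalizedDerivOfComplex_eq_qParam_mul_deriv hh hper hhol hbdd τ).symm

lemma tendsto_E2_atImInfty : Tendsto E2 atImInfty (𝓝 1) :=
  tendsto_atImInfty_of_hasSum_qExpansion one_pos E2_mdifferentiable hasSum_qParam_E2

lemma tendsto_serreDerivative_atImInfty (hh : 0 < h) (hhol : MDiff F)
    (hF : ∀ τ : ℍ, HasSum (fun m ↦ c m • 𝕢 h τ ^ m) (F τ)) (k : ℂ) :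
    Tendsto (serreDerivative k F) atImInfty (𝓝 (-(k / 12) * c 0)) := by
  have hD := tendsto_normalizedDerivOfComplex_atImInfty hh
    (periodic_comp_ofComplex_of_hasSum_qExpansion hh.ne' hF) hhol
    (isBoundedAtImInfty_of_hasSum_qExpansion hh hF)
  convert! hD.sub ((tendsto_E2_atImInfty.const_mul (k * 12⁻¹)).mul
    (tendsto_atImInfty_of_hasSum_qExpansion hh hhol hF)) using 2
  ring

end QExpansion

section LevelOne

/-- Level one has no cusp forms of weight below 12, so the limit at `i∞` determines a form. -/
lemma eq_smul_of_tendsto_atImInfty {k : ℤ} (hk : k < 12) {F : ℍ → ℂ} (hF : MDiff F)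
    (hslash : ∀ γ : SL(2, ℤ), F ∣[k] γ = F) {G : ModularForm 𝒮ℒ k}
    (hG : Tendsto G atImInfty (𝓝 1)) {a : ℂ} (hlim : Tendsto F atImInfty (𝓝 a)) :
    F = a • (G : ℍ → ℂ) := by
  have hslash' (γ : SL(2, ℤ)) : (F - a • (G : ℍ → ℂ)) ∣[k] γ = F - a • (G : ℍ → ℂ) := by
    have hGγ : (G : ℍ → ℂ) ∣[k] γ = G := SlashInvariantFormClass.slash_action_eq G _ ⟨γ, rfl⟩
    rw [sub_eq_add_neg, SlashAction.add_slash, SlashAction.neg_slash, hslash,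
      ModularForm.SL_smul_slash, hGγ]
  have hzero : Tendsto (F - a • (G : ℍ → ℂ)) atImInfty (𝓝 0) := by
    simpa only [mul_one, sub_self] using! hlim.sub (hG.const_mul a)
  let f : CuspForm 𝒮ℒ k :=
    { toFun := F - a • (G : ℍ → ℂ)
      slash_action_eq' := by
        rintro _ ⟨γ, rfl⟩
        exact hslash' γ
      holo' := hF.sub (G.holo'.const_smul a)
      zero_at_cusps' := by
        intro c hc
        rw [Subgroup.IsArithmetic.isCusp_iff_isCusp_SL2Z] at hc
        rw [OnePoint.isZeroAt_iff_forall_SL2Z hc]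
        intro γ _
        rwa [hslash'] }
  have hf : f = 0 :=
    rank_zero_iff_forall_zero.mp (CuspForm.rank_eq_zero_of_weight_lt_twelve hk) f
  exact sub_eq_zero.mp (congrArg DFunLike.coe hf)

lemma E_slash {k : ℕ} (hk : 3 ≤ k) (γ : SL(2, ℤ)) :
    (E hk : ℍ → ℂ) ∣[(k : ℤ)] γ = E hk :=
  SlashInvariantFormClass.slash_action_eq (E hk) _ ⟨γ, rfl⟩

lemma hasSum_qParam_E {k : ℕ} (hk : 3 ≤ k) (τ : ℍ) :
    HasSum (fun m ↦ (qExpansion 1 (E hk)).coeff m • 𝕢 1 τ ^ m) (E hk τ) :=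
  ModularForm.hasSum_qExpansion (f := E hk) one_pos one_mem_strictPeriods_SL τ

lemma tendsto_E_atImInfty {k : ℕ} (hk : 3 ≤ k) (hk2 : Even k) :
    Tendsto (E hk) atImInfty (𝓝 1) := by
  rw [← E_qExpansion_coeff_zero hk hk2]
  exact tendsto_atImInfty_of_hasSum_qExpansion one_pos (E hk).holo' (hasSum_qParam_E hk)

lemma tendsto_serreDerivative_E_atImInfty {k : ℕ} (hk : 3 ≤ k) (hk2 : Even k) :
    Tendsto (serreDerivative (k : ℤ) (E hk)) atImInfty (𝓝 (-(k / 12))) := by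
  simpa [E_qExpansion_coeff_zero hk hk2] using
    tendsto_serreDerivative_atImInfty one_pos (E hk).holo' (hasSum_qParam_E hk) k

lemma serreDerivative_E₄ : serreDerivative 4 E₄ = (-1 / 3 : ℂ) • (E₆ : ℍ → ℂ) := by
  have hlim := tendsto_serreDerivative_E_atImInfty (k := 4) (by norm_num) ⟨2, rfl⟩
  convert! eq_smul_of_tendsto_atImInfty (k := 6) (by norm_num)
    (serreDerivative_mdifferentiable _ E₄.holo')
    (fun γ ↦ serreDerivative_slash_invariant (k := 4) E₄.holo' (E_slash _ γ))
    (tendsto_E_atImInfty (by norm_num) ⟨3, rfl⟩) hlim using 2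
  norm_num

lemma serreDerivative_E₆ : serreDerivative 6 E₆ = (-1 / 2 : ℂ) • (E₄ : ℍ → ℂ) ^ 2 := by
  have hlim := tendsto_serreDerivative_E_atImInfty (k := 6) (by norm_num) ⟨3, rfl⟩
  have hE₄ := tendsto_E_atImInfty (k := 4) (by norm_num) ⟨2, rfl⟩
  have hE₄sq : Tendsto (E₄.mul E₄) atImInfty (𝓝 1) := by
    simpa only [mul_one] using! hE₄.mul hE₄
  have hslash (γ : SL(2, ℤ)) : serreDerivative (6 : ℤ) E₆ ∣[(4 + 4 : ℤ)] γ =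
      serreDerivative (6 : ℤ) E₆ :=
    serreDerivative_slash_invariant (k := 6) E₆.holo' (E_slash _ γ)
  have h := eq_smul_of_tendsto_atImInfty (k := 4 + 4) (by norm_num)
    (serreDerivative_mdifferentiable _ E₆.holo') hslash hE₄sq hlim
  rw [ModularForm.coe_mul, ← sq] at h
  convert! h using 2
  norm_num

end LevelOne

section E2

variable (γ : SL(2, ℤ))

lemma E2_slash_eq_sub_smul_D2 :
    E2 ∣[(2 : ℤ)] γ = E2 - (3 / π ^ 2 : ℂ) • D2 γ := by
  rw [E2_slash_action, riemannZeta_two]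
  congr 2
  field_simp
  norm_num

lemma mdifferentiable_D2 : MDiff (D2 γ) := by
  convert! (mdifferentiable_inv_denom (γ : GL (Fin 2) ℝ)).const_smul
    (2 * π * Complex.I * γ 1 0) using 1

lemma normalizedDerivOfComplex_D2 : D (D2 γ) = (1 / (4 * π ^ 2) : ℂ) • D2 γ ^ 2 := by
  ext τ
  have hcomp : D2 γ ∘ ofComplex =ᶠ[𝓝 (τ : ℂ)]
      fun z ↦ 2 * π * Complex.I * γ 1 0 * denom γ z ^ (-1 : ℤ) := by
    filter_upwards [isOpen_upperHalfPlaneSet.mem_nhds τ.2] with z hz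
    simp [D2, ofComplex_apply_of_im_pos hz, div_eq_mul_inv]
  have hden := denom_ne_zero γ τ
  rw [normalizedDerivOfComplex, hcomp.deriv_eq,
    ((hasDerivAt_denom_zpow γ (-1) τ).const_mul _).deriv]
  simp only [Pi.smul_apply, Pi.pow_apply, D2, smul_eq_mul, zpow_sub₀ hden, zpow_neg, zpow_one,
    Int.cast_neg, Int.cast_one]
  have hγ : (γ : GL (Fin 2) ℝ) 1 0 = (γ 1 0 : ℝ) := by simp
  rw [hγ, ofReal_intCast]
  field_simp
  linear_combination -4 * (γ 1 0 : ℂ) ^ 2 * I_sq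

lemma normalizedDerivOfComplex_E2_slash :
    D E2 ∣[(4 : ℤ)] γ = D E2 - (1 / (2 * π ^ 2) : ℂ) • (D2 γ * E2) +
      (3 / (4 * π ^ 4) : ℂ) • D2 γ ^ 2 := by
  have hcoeff (τ : ℍ) :
      (2 * π * Complex.I)⁻¹ * (γ 1 0 / denom γ τ) = -(1 / (4 * π ^ 2)) * D2 γ τ := by
    have hden := denom_ne_zero γ τ
    rw [D2]
    field_simp
    linear_combination 4 * (γ 1 0 : ℂ) * Complex.I_sq
  have hD : D E2 ∣[(4 : ℤ)] γ =
      D (E2 ∣[(2 : ℤ)] γ) - (1 / (2 * π ^ 2) : ℂ) • (D2 γ * E2 ∣[(2 : ℤ)] γ) := by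
    ext τ
    have hτ := congrFun (normalizedDerivOfComplex_SL_slash (k := 2) (γ := γ) E2_mdifferentiable) τ
    simp only [Pi.sub_apply, Pi.smul_apply, Pi.mul_apply, smul_eq_mul] at hτ ⊢
    rw [mul_assoc (((2 : ℤ)) : ℂ), hcoeff] at hτ
    push_cast at hτ
    linear_combination -hτ
  rw [hD, E2_slash_eq_sub_smul_D2, normalizedDerivOfComplex_sub _ _ E2_mdifferentiable
    ((mdifferentiable_D2 γ).const_smul _), normalizedDerivOfComplex_smul _ _ (mdifferentiable_D2 γ),
    normalizedDerivOfComplex_D2]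
  ext τ
  simp only [Pi.add_apply, Pi.sub_apply, Pi.smul_apply, Pi.mul_apply, Pi.pow_apply, smul_eq_mul]
  field_simp
  ring

lemma serreDerivative_one_E2_slash :
    serreDerivative 1 E2 ∣[(4 : ℤ)] γ = serreDerivative 1 E2 := by
  have hsq : (E2 * E2) ∣[(4 : ℤ)] γ = (E2 - (3 / π ^ 2 : ℂ) • D2 γ) ^ 2 := by
    rw [sq, ← E2_slash_eq_sub_smul_D2]
    exact ModularForm.mul_slash_SL2 2 2 γ E2 E2
  have hserre : serreDerivative 1 E2 = D E2 + (-12⁻¹ : ℂ) • (E2 * E2) := by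
    ext τ
    simp [serreDerivative_apply, sub_eq_add_neg, mul_assoc]
  rw [hserre, SlashAction.add_slash, ModularForm.SL_smul_slash, normalizedDerivOfComplex_E2_slash,
    hsq]
  ext τ
  simp only [Pi.add_apply, Pi.sub_apply, Pi.smul_apply, Pi.mul_apply, Pi.pow_apply, smul_eq_mul]
  field_simp
  ring

lemma serreDerivative_E2 : serreDerivative 1 E2 = (-1 / 12 : ℂ) • (E₄ : ℍ → ℂ) := by
  have hlim := tendsto_serreDerivative_atImInfty one_pos E2_mdifferentiable hasSum_qParam_E2 1
  convert! eq_smul_of_tendsto_atImInfty (k := 4) (by norm_num)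
    (serreDerivative_mdifferentiable _ E2_mdifferentiable) serreDerivative_one_E2_slash
    (tendsto_E_atImInfty (by norm_num) ⟨2, rfl⟩) hlim using 2
  norm_num

end E2

end Ramanujan

section Bridge

open UpperHalfPlane hiding I J
open ModularForm EisensteinSeries Derivative
open scoped Manifold MatrixGroups Real

lemma E_eq_one_sub_tsum {k : ℕ} (hk : 3 ≤ k) (hk2 : Even k) (z : ℍ) :
    E hk z = 1 - (2 * k / bernoulli k) *
      ∑' n : ℕ, (∑ d ∈ (n + 1).divisors, (d : ℂ) ^ (k - 1)) * qq z ^ (n + 1) := by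
  rw [q_expansion_bernoulli hk hk2 z]
  congr 2
  have hsucc := tsum_pnat_eq_tsum_succ
    (f := fun n : ℕ ↦ (ArithmeticFunction.sigma (k - 1) n : ℂ) * qq z ^ n)
  simp only [ArithmeticFunction.sigma_apply, Nat.cast_sum, Nat.cast_pow] at hsucc
  simpa only [ArithmeticFunction.sigma_apply, Nat.cast_sum, Nat.cast_pow, qq, zpow_natCast]
    using hsucc

lemma E4_coe (z : ℍ) : E4 z = E₄ z := by
  rw [E_eq_one_sub_tsum _ ⟨2, rfl⟩, show bernoulli 4 = -1 / 30 by decide +kernel, E4]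
  norm_num

lemma E6_coe (z : ℍ) : E6 z = E₆ z := by
  rw [E_eq_one_sub_tsum _ ⟨3, rfl⟩, show bernoulli 6 = 1 / 42 by decide +kernel, E6]
  norm_num

lemma dedekindEta_eq_eta : dedekindEta = ModularForm.eta := by
  ext z
  rw [dedekindEta, ModularForm.eta, Function.Periodic.qParam]
  congr 2
  · push_cast
    ring
  · simp only [ModularForm.eta_q_eq_pow, qq]

/-- The quasimodular Eisenstein series `E₂` on `ℂ`, with junk values off the upper half-plane. -/
def quasiE2 (z : ℂ) : ℂ := E2 (ofComplex z)

variable {z : ℂ}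

lemma dedekindEta_ne_zero (hz : 0 < z.im) : dedekindEta z ≠ 0 :=
  dedekindEta_eq_eta ▸ eta_ne_zero hz

lemma E4_cube_sub_E6_sq (hz : 0 < z.im) :
    E4 z ^ 3 - E6 z ^ 2 = 1728 * dedekindEta z ^ 24 := by
  lift z to ℍ using hz
  have hΔ := discriminant_eq_E₄_cube_sub_E₆_sq z
  rw [ModularForm.discriminant, ← dedekindEta_eq_eta, ← E4_coe, ← E6_coe] at hΔ
  linear_combination -1728 * hΔ

lemma J_eq_div_eta (hz : 0 < z.im) : J z = E4 z ^ 3 / (1728 * dedekindEta z ^ 24) := by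
  rw [J, E4_cube_sub_E6_sq hz]

lemma J_sub_one_eq_div_eta (hz : 0 < z.im) :
    J z - 1 = E6 z ^ 2 / (1728 * dedekindEta z ^ 24) := by
  have hη := dedekindEta_ne_zero hz
  rw [J_eq_div_eta hz]
  field_simp
  linear_combination E4_cube_sub_E6_sq hz

lemma J_eq_one_iff (hz : 0 < z.im) : J z = 1 ↔ E6 z = 0 := by
  rw [← sub_eq_zero, J_sub_one_eq_div_eta hz]
  simp [dedekindEta_ne_zero hz]

lemma E4_ne_zero_of_J_ne_zero (hJ : J z ≠ 0) : E4 z ≠ 0 := fun h ↦ hJ (by simp [J, h])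

/-- `S = (0 -1; 1 0)` fixes `i` and acts in weight 6 by the factor `i⁻⁶ = -1`. -/
lemma E6_I : E6 Complex.I = 0 := by
  have hS : ModularGroup.S • UpperHalfPlane.I = UpperHalfPlane.I := by
    ext1
    rw [modular_S_smul]
    simp
  have h := congrFun (E_slash (k := 6) (by norm_num) ModularGroup.S) UpperHalfPlane.I
  have hI : (UpperHalfPlane.I : ℂ) ^ (-(6 : ℕ) : ℤ) = -1 := by
    rw [coe_I, zpow_neg, zpow_natCast, show 6 = 2 * 3 from rfl, pow_mul, I_sq]
    norm_num
  rw [SL_slash_apply, ModularGroup.denom_S, hS, hI, ← E6_coe, coe_I] at h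
  linear_combination -h / 2

lemma J_I : J Complex.I = 1 := (J_eq_one_iff (by simp)).mpr E6_I

/-- `HasSerreDerivAt k f f' z` says that `f` is complex differentiable at `z` and that its Serre
derivative `(2πi)⁻¹ df/dτ - (k/12) E₂ f` of weight `k` takes the value `f'` there. -/
def HasSerreDerivAt (k : ℂ) (f : ℂ → ℂ) (f' z : ℂ) : Prop :=
  HasDerivAt f (2 * π * Complex.I * (f' + k / 12 * quasiE2 z * f z)) z

lemma hasSerreDerivAt_of_eqOn {k : ℂ} {f : ℂ → ℂ} {F : ℍ → ℂ} (hF : MDiff F)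
    (hf : ∀ τ : ℍ, f τ = F τ) (τ : ℍ) : HasSerreDerivAt k f (serreDerivative k F τ) τ := by
  have heq : f =ᶠ[𝓝 (τ : ℂ)] F ∘ ofComplex := by
    filter_upwards [isOpen_upperHalfPlaneSet.mem_nhds τ.2] with w hw
    simpa [ofComplex_apply_of_im_pos hw] using hf ⟨w, hw⟩
  have hderiv := (mdifferentiableAt_iff.mp (hF τ)).hasDerivAt
  refine (hderiv.congr_of_eventuallyEq heq).congr_deriv ?_
  rw [serreDerivative_apply, normalizedDerivOfComplex, quasiE2, ofComplex_apply, hf]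
  field_simp
  ring

lemma hasSerreDerivAt_E4 (hz : 0 < z.im) : HasSerreDerivAt 4 E4 (-E6 z / 3) z := by
  lift z to ℍ using hz
  convert! hasSerreDerivAt_of_eqOn (F := E₄) E₄.holo' E4_coe z using 1
  rw [serreDerivative_E₄, Pi.smul_apply, smul_eq_mul, E6_coe]
  ring

lemma hasSerreDerivAt_E6 (hz : 0 < z.im) : HasSerreDerivAt 6 E6 (-E4 z ^ 2 / 2) z := by
  lift z to ℍ using hz
  convert! hasSerreDerivAt_of_eqOn (F := E₆) E₆.holo' E6_coe z using 1
  rw [serreDerivative_E₆, Pi.smul_apply, Pi.pow_apply, smul_eq_mul, E4_coe]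
  ring

lemma hasSerreDerivAt_quasiE2 (hz : 0 < z.im) : HasSerreDerivAt 1 quasiE2 (-E4 z / 12) z := by
  lift z to ℍ using hz
  convert! hasSerreDerivAt_of_eqOn (f := quasiE2) E2_mdifferentiable
    (fun τ ↦ by rw [quasiE2, ofComplex_apply]) z using 1
  rw [serreDerivative_E2, Pi.smul_apply, smul_eq_mul, E4_coe]
  ring

lemma hasSerreDerivAt_dedekindEta (hz : 0 < z.im) : HasSerreDerivAt (1 / 2) dedekindEta 0 z := by
  have hlog := logDeriv_eta_eq_E2 ⟨z, hz⟩
  rw [logDeriv_apply, div_eq_iff (eta_ne_zero hz)] at hlog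
  rw [dedekindEta_eq_eta]
  refine (differentiableAt_eta_of_mem_upperHalfPlaneSet hz).hasDerivAt.congr_deriv ?_
  rw [show deriv ModularForm.eta z = _ from hlog, quasiE2, ofComplex_apply_of_im_pos hz]
  ring

end Bridge

section SerreDeriv

open scoped Real

variable {k l : ℂ} {f g : ℂ → ℂ} {f' g' z : ℂ}

namespace HasSerreDerivAt

lemma differentiableAt (hf : HasSerreDerivAt k f f' z) : DifferentiableAt ℂ f z :=
  HasDerivAt.differentiableAt hf

lemma congr (hf : HasSerreDerivAt k f f' z) (hk : k = l) (hf' : f' = g') :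
    HasSerreDerivAt l f g' z :=
  hk ▸ hf' ▸ hf

lemma mul (hf : HasSerreDerivAt k f f' z) (hg : HasSerreDerivAt l g g' z) :
    HasSerreDerivAt (k + l) (fun t ↦ f t * g t) (f' * g z + f z * g') z :=
  (HasDerivAt.fun_mul hf hg).congr_deriv (by ring)

lemma div (hf : HasSerreDerivAt k f f' z) (hg : HasSerreDerivAt l g g' z) (hgz : g z ≠ 0) :
    HasSerreDerivAt (k - l) (fun t ↦ f t / g t) ((f' * g z - f z * g') / g z ^ 2) z :=
  (HasDerivAt.fun_div hf hg hgz).congr_deriv (by field_simp; ring)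

lemma const_mul (hf : HasSerreDerivAt k f f' z) (c : ℂ) :
    HasSerreDerivAt k (fun t ↦ c * f t) (c * f') z :=
  (HasDerivAt.const_mul c hf).congr_deriv (by ring)

lemma pow (hf : HasSerreDerivAt k f f' z) (n : ℕ) :
    HasSerreDerivAt (n * k) (fun t ↦ f t ^ n) (n * f z ^ (n - 1) * f') z := by
  refine (HasDerivAt.fun_pow hf n).congr_deriv ?_
  rcases n with - | n
  · simp
  · simp only [Nat.add_sub_cancel, pow_succ]
    ring

lemma polynomial_eval (hf : HasSerreDerivAt 0 f f' z) (P : Polynomial ℂ) :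
    HasSerreDerivAt 0 (fun t ↦ P.eval (f t)) (P.derivative.eval (f z) * f') z :=
  ((P.hasDerivAt (f z)).comp z hf).congr_deriv (by ring)

/-- Bol's identity in weight `-1`: the `E₂`-terms cancel in the second derivative. -/
lemma hasDerivAt_deriv {f₁ : ℂ → ℂ} {f₂ : ℂ} (hz : 0 < z.im)
    (hf : ∀ᶠ t in 𝓝 z, HasSerreDerivAt (-1) f (f₁ t) t) (hf₁ : HasSerreDerivAt 1 f₁ f₂ z) :
    HasDerivAt (deriv f) ((2 * π * I) ^ 2 * (f₂ + E4 z / 144 * f z)) z := by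
  have hderiv : deriv f =ᶠ[𝓝 z]
      fun t ↦ 2 * π * I * (f₁ t + -1 / 12 * quasiE2 t * f t) :=
    hf.mono fun t ht ↦ HasDerivAt.deriv ht
  refine (((HasDerivAt.fun_add hf₁ (((HasDerivAt.const_mul (-1 / 12)
    (hasSerreDerivAt_quasiE2 hz)).fun_mul hf.self_of_nhds))).const_mul
      (2 * π * I)).congr_of_eventuallyEq hderiv).congr_deriv ?_
  ring

end HasSerreDerivAt

lemma hasSerreDerivAt_J (hz : 0 < z.im) :
    HasSerreDerivAt 0 J (-(E4 z ^ 2 * E6 z) / (1728 * dedekindEta z ^ 24)) z := by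
  have hη := dedekindEta_ne_zero hz
  have hJ := ((hasSerreDerivAt_E4 hz).pow 3).div
    (((hasSerreDerivAt_dedekindEta hz).pow 24).const_mul 1728) (by simp [hη])
  have heq : J =ᶠ[𝓝 z] fun t ↦ E4 t ^ 3 / (1728 * dedekindEta t ^ 24) := by
    filter_upwards [UpperHalfPlane.isOpen_upperHalfPlaneSet.mem_nhds hz] with t ht
      using J_eq_div_eta ht
  refine (HasDerivAt.congr_of_eventuallyEq hJ heq).congr_deriv ?_
  rw [J_eq_div_eta hz]
  field_simp
  ring

end SerreDeriv

section Stieltjes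

open Polynomial

variable {K ι : Type*} [Field K]

/-- The hypergeometric operator `X (X - 1) d²/dX² + (b X + c) d/dX`, with singular points
`0, 1, ∞`. -/
def hypergeometricOperator (b c : K) (P : K[X]) : K[X] :=
  X * (X - 1) * derivative (derivative P) + (C b * X + C c) * derivative P

lemma coeff_hypergeometricOperator (P : K[X]) (b c : K) (m : ℕ) :
    (hypergeometricOperator b c P).coeff m =
      m * (m - 1 + b) * P.coeff m + (m + 1) * (c - m) * P.coeff (m + 1) := by
  simp only [hypergeometricOperator, mul_sub, sub_mul, add_mul, mul_assoc, mul_one,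
    coeff_add, coeff_sub, coeff_C_mul]
  rcases m with - | - | m <;>
    simp only [coeff_X_mul, coeff_X_mul_zero, coeff_derivative] <;> push_cast <;> ring

variable [DecidableEq ι] {s : Finset ι} {y : ι → K}

lemma eval_derivative_derivative_nodal (hy : Set.InjOn y s) {i : ι} (hi : i ∈ s) :
    (derivative (derivative (Lagrange.nodal s y))).eval (y i) =
      2 * (derivative (Lagrange.nodal s y)).eval (y i) * ∑ j ∈ s.erase i, 1 / (y i - y j) := by
  have hlog : (derivative (Lagrange.nodal (s.erase i) y)).eval (y i) =
      (Lagrange.nodal (s.erase i) y).eval (y i) * ∑ j ∈ s.erase i, 1 / (y i - y j) := by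
    rw [Lagrange.derivative_nodal, eval_finsetSum, Finset.mul_sum]
    refine Finset.sum_congr rfl fun j hj ↦ ?_
    have hij : y i - y j ≠ 0 := sub_ne_zero.mpr fun h ↦
      Finset.ne_of_mem_erase hj (hy hi (Finset.mem_of_mem_erase hj) h).symm
    rw [Lagrange.nodal_eq_mul_nodal_erase hj, eval_mul, eval_sub, eval_X, eval_C]
    field_simp [hij]
  rw [Lagrange.nodal_eq_mul_nodal_erase hi]
  simp only [derivative_mul, derivative_sub, derivative_X, derivative_C, derivative_add, eval_add,
    eval_mul, eval_sub, eval_X, eval_C, sub_self, sub_zero, one_mul, zero_mul, add_zero, hlog]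
  ring

/-- The Heine–Stieltjes correspondence: the system says that both sides agree at the nodes, and
their difference has degree smaller than the number of nodes. -/
lemma hypergeometricOperator_nodal (hy : Set.InjOn y s) {b c : K}
    (hsys : ∀ i ∈ s,
      2 * (y i * (y i - 1)) * (∑ j ∈ s.erase i, 1 / (y i - y j)) + (b * y i + c) = 0) :
    hypergeometricOperator b c (Lagrange.nodal s y) =
      C ((s.card : K) * (s.card - 1 + b)) * Lagrange.nodal s y := by
  rw [← sub_eq_zero]
  refine eq_zero_of_degree_lt_of_eval_index_eq_zero s hy ?_ fun i hi ↦ ?_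
  · refine (degree_lt_iff_coeff_zero _ _).mpr fun m hm ↦ ?_
    have hsucc : (Lagrange.nodal s y).coeff (m + 1) = 0 :=
      coeff_eq_zero_of_natDegree_lt (by rw [Lagrange.natDegree_nodal]; lia)
    rw [coeff_sub, coeff_C_mul, coeff_hypergeometricOperator, hsucc]
    rcases hm.eq_or_lt with rfl | hm
    · ring
    · rw [coeff_eq_zero_of_natDegree_lt (by rwa [Lagrange.natDegree_nodal])]
      ring
  · simp only [hypergeometricOperator, eval_sub, eval_add, eval_mul, eval_X, eval_C, eval_one,
      eval_derivative_derivative_nodal hy hi, Lagrange.eval_nodal_at_node hi]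
    linear_combination (derivative (Lagrange.nodal s y)).eval (y i) * hsys i hi

lemma hypergeometricOperator_nodal_4_9_12 [CharZero K] [Fintype ι]
    (hy : Function.Injective y) (hy₀ : ∀ i, y i ≠ 0) (hy₁ : ∀ i, y i ≠ 1)
    (hsys : ∀ i, 4 / y i + 9 / (y i - 1) + ∑ j ∈ Finset.univ.erase i, 12 / (y i - y j) = 0) :
    hypergeometricOperator (13 / 6) (-2 / 3) (Lagrange.nodal Finset.univ y) =
      C ((Fintype.card ι : K) * (6 * Fintype.card ι + 7) / 6) * Lagrange.nodal Finset.univ y := by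
  rw [hypergeometricOperator_nodal hy.injOn fun i _ ↦ ?_, Finset.card_univ]
  · congr 2
    ring
  · have hsum : ∑ j ∈ Finset.univ.erase i, 12 / (y i - y j) =
        12 * ∑ j ∈ Finset.univ.erase i, 1 / (y i - y j) := by
      simp only [Finset.mul_sum, mul_one_div]
    have h₀ := hy₀ i
    have h₁ := sub_ne_zero.mpr (hy₁ i)
    have hi := hsys i
    rw [hsum] at hi
    field_simp at hi
    linear_combination hi / 6

end Stieltjes

section DoublePole

variable {f u : ℂ → ℂ} {c z w : ℂ}

lemma schwarzian_div_sq {u₂ : ℂ} (hc : c ≠ 0) (hf : f =ᶠ[𝓝 z] fun t ↦ c / u t ^ 2)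
    (hu : ∀ᶠ t in 𝓝 z, DifferentiableAt ℂ u t) (hu₂ : HasDerivAt (deriv u) u₂ z) (hz : u z ≠ 0) :
    deriv (fun t ↦ deriv f t / f t) z - 1 / 2 * (deriv f z / f z) ^ 2 = -2 * u₂ / u z := by
  have huz : HasDerivAt u (deriv u z) z := hu.self_of_nhds.hasDerivAt
  have hlog : (fun t ↦ deriv f t / f t) =ᶠ[𝓝 z] fun t ↦ -2 * deriv u t / u t := by
    filter_upwards [hf, hf.deriv, hu, huz.continuousAt.eventually_ne hz] with t hft hft' hut hut₀
    have hder : HasDerivAt (fun t ↦ c / u t ^ 2) (-2 * c * deriv u t / u t ^ 3) t :=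
      ((hasDerivAt_const t c).fun_div (hut.hasDerivAt.fun_pow 2) (pow_ne_zero 2 hut₀)).congr_deriv
        (by push_cast; field_simp; ring)
    rw [hft, hft', hder.deriv]
    field_simp
  have hder : HasDerivAt (fun t ↦ -2 * deriv u t / u t)
      ((-2 * u₂ * u z - -2 * deriv u z * deriv u z) / u z ^ 2) z :=
    (hu₂.const_mul (-2)).fun_div huz hz
  rw [hlog.deriv_eq, hder.deriv, hlog.eq_of_nhds]
  field_simp
  ring

lemma analyticAt_dslope (hu : AnalyticAt ℂ u w) : AnalyticAt ℂ (dslope u w) w :=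
  let ⟨_, hp⟩ := hu
  ⟨_, hp.has_fpower_series_dslope_fslope⟩

lemma deriv_deriv_eq_two_mul_deriv_dslope (hu : AnalyticAt ℂ u w) :
    deriv (deriv u) w = 2 * deriv (dslope u w) w := by
  have hG := analyticAt_dslope hu
  have hder : deriv u =ᶠ[𝓝 w] fun t ↦ dslope u w t + (t - w) * deriv (dslope u w) t := by
    filter_upwards [hG.eventually_analyticAt] with t hGt
    have hu_eq : u = fun t ↦ u w + (t - w) * dslope u w t := by
      ext t
      rw [← smul_eq_mul, sub_smul_dslope, add_sub_cancel]
    have hmul := ((((hasDerivAt_id' t).sub_const w).fun_mul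
      hGt.differentiableAt.hasDerivAt).const_add (u w)).congr_of_eventuallyEq
        (Eventually.of_forall (congrFun hu_eq))
    rw [hmul.deriv, one_mul]
  have hsum := hG.differentiableAt.hasDerivAt.fun_add
    (((hasDerivAt_id' w).sub_const w).fun_mul hG.deriv.differentiableAt.hasDerivAt)
  rw [hder.deriv_eq, hsum.deriv]
  ring

/-- `u = (z - w) G` with `G = dslope u w`, and the residue of `c / u²` is `-2 c G'(w) / G(w)³`. -/
lemma tendsto_deriv_sub_sq_mul_div_sq (hu : AnalyticAt ℂ u w) (h₀ : u w = 0)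
    (h₁ : deriv u w ≠ 0) (h₂ : deriv (deriv u) w = 0) (hf : f =ᶠ[𝓝[≠] w] fun t ↦ c / u t ^ 2) :
    Tendsto (deriv fun z ↦ (z - w) ^ 2 * f z) (𝓝[≠] w) (𝓝 0) := by
  have hG := analyticAt_dslope hu
  have hGw : dslope u w w ≠ 0 := by rwa [dslope_same]
  have hG' : deriv (dslope u w) w = 0 := by
    simpa [h₂] using deriv_deriv_eq_two_mul_deriv_dslope hu
  have hF : AnalyticAt ℂ (fun z ↦ c / dslope u w z ^ 2) w :=
    analyticAt_const.fun_div (hG.fun_pow 2) (pow_ne_zero 2 hGw)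
  have hF' : deriv (fun z ↦ c / dslope u w z ^ 2) w = 0 := by
    have hder := (hasDerivAt_const w c).fun_div
      (hG.differentiableAt.hasDerivAt.fun_pow 2) (pow_ne_zero 2 hGw)
    simpa [hG'] using hder.deriv
  have heq : (fun z ↦ (z - w) ^ 2 * f z) =ᶠ[𝓝[≠] w] fun z ↦ c / dslope u w z ^ 2 := by
    filter_upwards [hf, self_mem_nhdsWithin] with z hfz hzw
    have hzw' : z - w ≠ 0 := sub_ne_zero.mpr hzw
    have huz : u z = (z - w) * dslope u w z := by
      rw [← smul_eq_mul, sub_smul_dslope, h₀, sub_zero]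
    rw [hfz, huz, mul_pow]
    field_simp
  rw [← hF']
  exact (hF.deriv.continuousAt.tendsto.mono_left nhdsWithin_le_nhds).congr'
    heq.nhdsNE_deriv.symm

end DoublePole

section ReversedSign

lemma strictAntiOn_externalField_4_9 :
    StrictAntiOn (fun t : ℝ ↦ 4 / t + 9 / (t - 1)) (Set.Ioo 0 1) := by
  rintro a ⟨ha₀, -⟩ b ⟨-, hb₁⟩ hab
  refine add_lt_add (div_lt_div_of_pos_left four_pos ha₀ hab) ?_
  have h : 9 / (1 - a) < 9 / (1 - b) := by gcongr
  rwa [← neg_lt_neg_iff, ← div_neg, ← div_neg, neg_sub, neg_sub]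

variable {ι : Type*} [Fintype ι] [DecidableEq ι] {φ : ℝ → ℝ} {s : Set ℝ} {c : ℝ} {x : ι → ℝ}

/-- At the smallest node all interaction terms are nonnegative and at the largest node all are
nonpositive, which is incompatible with the decrease of the external field. -/
lemma subsingleton_of_reversed_stieltjes_system (hφ : StrictAntiOn φ s) (hc : 0 ≤ c)
    (hx : ∀ i, x i ∈ s) (hinj : Function.Injective x)
    (hsys : ∀ i, φ (x i) + ∑ j ∈ Finset.univ.erase i, c / (x j - x i) = 0) :
    Subsingleton ι := by
  by_contra hι
  rw [not_subsingleton_iff_nontrivial] at hι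
  obtain ⟨i, hi⟩ := Finite.exists_min x
  obtain ⟨k, hk⟩ := Finite.exists_max x
  have hik : x i < x k := by
    obtain ⟨j, hj⟩ := exists_ne i
    exact ((hi j).lt_of_ne (hinj.ne hj.symm)).trans_le (hk j)
  have hmin : 0 ≤ ∑ j ∈ Finset.univ.erase i, c / (x j - x i) :=
    Finset.sum_nonneg fun j _ ↦ div_nonneg hc (sub_nonneg.mpr (hi j))
  have hmax : ∑ j ∈ Finset.univ.erase k, c / (x j - x k) ≤ 0 :=
    Finset.sum_nonpos fun j _ ↦ div_nonpos_of_nonneg_of_nonpos hc (sub_nonpos.mpr (hk j))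
  linarith [hφ (hx i) (hx k) hik, hsys i, hsys k]

lemma stieltjes_system_of_reversed (hφ : StrictAntiOn φ s) (hc : 0 ≤ c) (hx : ∀ i, x i ∈ s)
    (hinj : Function.Injective x)
    (hsys : ∀ i, φ (x i) + ∑ j ∈ Finset.univ.erase i, c / (x j - x i) = 0) (i : ι) :
    φ (x i) + ∑ j ∈ Finset.univ.erase i, c / (x i - x j) = 0 := by
  have := subsingleton_of_reversed_stieltjes_system hφ hc hx hinj hsys
  have herase : Finset.univ.erase i = ∅ := by
    ext j
    simp [Subsingleton.elim j i]
  simpa only [herase, Finset.sum_empty] using hsys i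

end ReversedSign

section EtaForm

open Polynomial

/-- The function `f = η⁴ / ((J - 1) P(J)²)` attached to a polynomial `P`. -/
def etaQuotient (P : ℂ[X]) (z : ℂ) : ℂ :=
  dedekindEta z ^ 4 / ((J z - 1) * P.eval (J z) ^ 2)

/-- The form `E₆ P(J) / η¹⁴` of weight `-1`: up to a constant factor it is the reciprocal
square root of `etaQuotient P`. -/
def invSqrtForm (P : ℂ[X]) (z : ℂ) : ℂ := E6 z * P.eval (J z) / dedekindEta z ^ 14

variable {P : ℂ[X]} {z w μ : ℂ}

lemma f7_eq_etaQuotient (n : ℕ) (x : Fin n → ℝ) :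
    f7 n x = etaQuotient (Lagrange.nodal Finset.univ fun i ↦ (x i : ℂ)) := by
  ext z
  rw [f7, etaQuotient, Lagrange.eval_nodal, Finset.prod_pow]

lemma etaQuotient_eq_div_invSqrtForm_sq (hz : 0 < z.im) :
    etaQuotient P z = 1728 / invSqrtForm P z ^ 2 := by
  have hη := dedekindEta_ne_zero hz
  rw [etaQuotient, invSqrtForm, J_sub_one_eq_div_eta hz]
  field_simp

lemma etaQuotient_eventuallyEq (hz : 0 < z.im) :
    etaQuotient P =ᶠ[𝓝 z] fun t ↦ 1728 / invSqrtForm P t ^ 2 := by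
  filter_upwards [UpperHalfPlane.isOpen_upperHalfPlaneSet.mem_nhds hz] with t ht
    using etaQuotient_eq_div_invSqrtForm_sq ht

lemma invSqrtForm_eq_zero_iff (hz : 0 < z.im) :
    invSqrtForm P z = 0 ↔ J z = 1 ∨ P.eval (J z) = 0 := by
  simp [invSqrtForm, dedekindEta_ne_zero hz, J_eq_one_iff hz]

/-- The Serre derivative of `invSqrtForm P`, a form of weight `1`. -/
def serreDerivInvSqrtForm (P : ℂ[X]) (z : ℂ) : ℂ :=
  -1 * (E4 z ^ 2 * (C (1 / 2) * P + (X - 1) * derivative P).eval (J z)) / dedekindEta z ^ 14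

lemma hasSerreDerivAt_invSqrtForm (P : ℂ[X]) (hz : 0 < z.im) :
    HasSerreDerivAt (-1) (invSqrtForm P) (serreDerivInvSqrtForm P z) z := by
  have hη := dedekindEta_ne_zero hz
  refine (((hasSerreDerivAt_E6 hz).mul ((hasSerreDerivAt_J hz).polynomial_eval P)).div
    ((hasSerreDerivAt_dedekindEta hz).pow 14) (pow_ne_zero 14 hη)).congr (by norm_num) ?_
  simp only [serreDerivInvSqrtForm, eval_add, eval_mul, eval_sub, eval_X, eval_one, eval_C,
    J_sub_one_eq_div_eta hz]
  field_simp
  ring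

lemma hasSerreDerivAt_serreDerivInvSqrtForm
    (hP : hypergeometricOperator (13 / 6) (-2 / 3) P = C μ * P) (hz : 0 < z.im) :
    HasSerreDerivAt 1 (serreDerivInvSqrtForm P) ((μ + 1 / 3) * E4 z * invSqrtForm P z) z := by
  have hη := dedekindEta_ne_zero hz
  have hE4 : E4 z ^ 3 / (1728 * dedekindEta z ^ 24) = J z := (J_eq_div_eta hz).symm
  have hPJ := congrArg (eval (J z)) hP
  refine (((((hasSerreDerivAt_E4 hz).pow 2).mul ((hasSerreDerivAt_J hz).polynomial_eval
    (C (1 / 2) * P + (X - 1) * derivative P))).const_mul (-1)).div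
    ((hasSerreDerivAt_dedekindEta hz).pow 14) (pow_ne_zero 14 hη)).congr (by norm_num) ?_
  simp only [hypergeometricOperator, invSqrtForm, derivative_add, derivative_mul, derivative_sub,
    derivative_X, derivative_one, derivative_C, eval_add, eval_mul, eval_sub, eval_X, eval_one,
    eval_C, zero_mul, zero_add, sub_zero, one_mul, mul_zero] at hPJ ⊢
  field_simp at hE4 ⊢
  linear_combination 10368 * dedekindEta z ^ 24 * E4 z * E6 z * hPJ +
    E4 z * E6 z * (6 * (J z - 1) * (derivative (derivative P)).eval (J z) +
      9 * (derivative P).eval (J z)) * hE4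

lemma hasDerivAt_deriv_invSqrtForm
    (hP : hypergeometricOperator (13 / 6) (-2 / 3) P = C μ * P) (hz : 0 < z.im) :
    HasDerivAt (deriv (invSqrtForm P))
      ((2 * Real.pi * I) ^ 2 * (μ + 49 / 144) * E4 z * invSqrtForm P z) z := by
  refine (HasSerreDerivAt.hasDerivAt_deriv hz ?_
    (hasSerreDerivAt_serreDerivInvSqrtForm hP hz)).congr_deriv (by ring)
  filter_upwards [UpperHalfPlane.isOpen_upperHalfPlaneSet.mem_nhds hz] with t ht
    using hasSerreDerivAt_invSqrtForm P ht

lemma analyticAt_invSqrtForm (P : ℂ[X]) (hz : 0 < z.im) : AnalyticAt ℂ (invSqrtForm P) z := by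
  refine DifferentiableOn.analyticAt (fun t ht ↦ ?_)
    (UpperHalfPlane.isOpen_upperHalfPlaneSet.mem_nhds hz)
  exact (hasSerreDerivAt_invSqrtForm P ht).differentiableAt.differentiableWithinAt

/-- At a zero of `u = E₆ P(J) / η¹⁴` the `E₂` term vanishes, so it suffices that the Serre
derivative, a multiple of `E₄² (P / 2 + (X - 1) P')(J)`, is nonzero. -/
lemma deriv_invSqrtForm_ne_zero (hP₀ : P.eval 0 ≠ 0) (hP₁ : P.eval 1 ≠ 0) (hP : P.Separable)
    (hz : 0 < z.im) (hu : invSqrtForm P z = 0) : deriv (invSqrtForm P) z ≠ 0 := by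
  have hroots := (invSqrtForm_eq_zero_iff hz).mp hu
  have hJ₀ : J z ≠ 0 := by
    intro h
    simp [h, hP₀] at hroots
  have hQ : (C (1 / 2) * P + (X - 1) * derivative P).eval (J z) ≠ 0 := by
    simp only [eval_add, eval_mul, eval_sub, eval_X, eval_one, eval_C]
    rcases hroots with hJ | hPJ
    · simpa [hJ] using hP₁
    · have hJ₁ : J z ≠ 1 := fun h ↦ hP₁ (h ▸ hPJ)
      simpa [hPJ, sub_ne_zero.mpr hJ₁] using hP.eval₂_derivative_ne_zero (RingHom.id ℂ) hPJ
  have hv : serreDerivInvSqrtForm P z ≠ 0 := div_ne_zero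
    (mul_ne_zero (by norm_num) (mul_ne_zero (pow_ne_zero 2 (E4_ne_zero_of_J_ne_zero hJ₀)) hQ))
    (pow_ne_zero 14 (dedekindEta_ne_zero hz))
  rw [HasDerivAt.deriv (hasSerreDerivAt_invSqrtForm P hz), hu, mul_zero, add_zero]
  exact mul_ne_zero two_pi_I_ne_zero hv

lemma invSqrtForm_ne_zero (hz : 0 < z.im) (hJ : J z ≠ 1) (hPJ : P.eval (J z) ≠ 0) :
    invSqrtForm P z ≠ 0 :=
  (invSqrtForm_eq_zero_iff hz).not.mpr (not_or_intro hJ hPJ)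

lemma differentiableAt_etaQuotient (hz : 0 < z.im) (hJ : J z ≠ 1) (hPJ : P.eval (J z) ≠ 0) :
    DifferentiableAt ℂ (etaQuotient P) z :=
  ((differentiableAt_const 1728).fun_div ((analyticAt_invSqrtForm P hz).differentiableAt.fun_pow 2)
    (pow_ne_zero 2 (invSqrtForm_ne_zero hz hJ hPJ))).congr_of_eventuallyEq
      (etaQuotient_eventuallyEq hz)

lemma etaQuotient_ne_zero (hz : 0 < z.im) (hJ : J z ≠ 1) (hPJ : P.eval (J z) ≠ 0) :
    etaQuotient P z ≠ 0 := by
  rw [etaQuotient_eq_div_invSqrtForm_sq hz]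
  exact div_ne_zero (by norm_num) (pow_ne_zero 2 (invSqrtForm_ne_zero hz hJ hPJ))

lemma schwarzian_etaQuotient
    (hP : hypergeometricOperator (13 / 6) (-2 / 3) P = C μ * P) (hz : 0 < z.im)
    (hJ : J z ≠ 1) (hPJ : P.eval (J z) ≠ 0) :
    deriv (fun t ↦ deriv (etaQuotient P) t / etaQuotient P t) z -
      1 / 2 * (deriv (etaQuotient P) z / etaQuotient P z) ^ 2 =
      8 * Real.pi ^ 2 * (μ + 49 / 144) * E4 z := by
  have hu := invSqrtForm_ne_zero hz hJ hPJ
  rw [schwarzian_div_sq (by norm_num) (etaQuotient_eventuallyEq hz)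
    ((analyticAt_invSqrtForm P hz).eventually_analyticAt.mono fun t ht ↦ ht.differentiableAt)
    (hasDerivAt_deriv_invSqrtForm hP hz) hu, div_eq_iff hu, mul_pow, I_sq]
  ring

lemma tendsto_deriv_sub_sq_mul_etaQuotient
    (hP : hypergeometricOperator (13 / 6) (-2 / 3) P = C μ * P) (hP₀ : P.eval 0 ≠ 0)
    (hP₁ : P.eval 1 ≠ 0) (hsep : P.Separable)
    (hw : 0 < w.im) (hJw : J w = 1 ∨ P.eval (J w) = 0) :
    Tendsto (deriv fun z ↦ (z - w) ^ 2 * etaQuotient P z) (𝓝[≠] w) (𝓝 0) := by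
  have hu := (invSqrtForm_eq_zero_iff hw).mpr hJw
  refine tendsto_deriv_sub_sq_mul_div_sq (analyticAt_invSqrtForm P hw) hu
    (deriv_invSqrtForm_ne_zero hP₀ hP₁ hsep hw hu) ?_
    ((etaQuotient_eventuallyEq hw).filter_mono nhdsWithin_le_nhds)
  rw [(hasDerivAt_deriv_invSqrtForm hP hw).deriv, hu, mul_zero]

end EtaForm

/-- The interaction terms enter with the sign `12 / (y i - y j)` of Stieltjes' equilibrium
equations, the one for which `∏ (X - y i)` solves the hypergeometric equation. -/
theorem solution_12n_plus_7_general {ι : Type*} [Fintype ι] [DecidableEq ι] (y : ι → ℂ)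
    (hy : Function.Injective y) (hy₀ : ∀ i, y i ≠ 0) (hy₁ : ∀ i, y i ≠ 1)
    (hsys : ∀ i, 4 / y i + 9 / (y i - 1) + ∑ j ∈ Finset.univ.erase i, 12 / (y i - y j) = 0) :
    let f := etaQuotient (Lagrange.nodal Finset.univ y)
    (∀ τ : ℂ, 0 < τ.im → J τ ≠ 1 → (∀ i, J τ ≠ y i) → DifferentiableAt ℂ f τ ∧ f τ ≠ 0) ∧
    (∀ w : ℂ, 0 < w.im → (J w = 1 ∨ ∃ i, J w = y i) →
      Tendsto (deriv fun z ↦ (z - w) ^ 2 * f z) (𝓝[≠] w) (𝓝 0)) ∧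
    (∀ τ : ℂ, 0 < τ.im → J τ ≠ 1 → (∀ i, J τ ≠ y i) →
      deriv (fun z ↦ deriv f z / f z) τ - 1 / 2 * (deriv f τ / f τ) ^ 2 =
        2 * (Real.pi : ℂ) ^ 2 * ((12 * (Fintype.card ι : ℂ) + 7) / 6) ^ 2 * E4 τ) := by
  intro f
  have hode := hypergeometricOperator_nodal_4_9_12 hy hy₀ hy₁ hsys
  have hsep : (Lagrange.nodal Finset.univ y).Separable :=
    Polynomial.separable_prod_X_sub_C_iff.mpr hy
  have hne {a : ℂ} (ha : ∀ i, a ≠ y i) : (Lagrange.nodal Finset.univ y).eval a ≠ 0 :=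
    Lagrange.eval_nodal_not_at_node fun i _ ↦ ha i
  refine ⟨fun τ hτ hJ hJy ↦ ⟨differentiableAt_etaQuotient hτ hJ (hne hJy),
    etaQuotient_ne_zero hτ hJ (hne hJy)⟩, fun w hw hJw ↦ ?_, fun τ hτ hJ hJy ↦ ?_⟩
  · refine tendsto_deriv_sub_sq_mul_etaQuotient hode (hne fun i ↦ (hy₀ i).symm)
      (hne fun i ↦ (hy₁ i).symm) hsep hw (hJw.imp_right ?_)
    rintro ⟨i, hi⟩
    rw [hi, Lagrange.eval_nodal_at_node (Finset.mem_univ i)]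
  · rw [schwarzian_etaQuotient hode hτ hJ (hne hJy)]
    ring

/-- If the `xᵢ ∈ (0,1)` solve `E^n_{4,9,12}`, then `f = η⁴/((J−1)∏(J−xᵢ)²)` is holomorphic and
nonvanishing away from the poles, has double poles with zero residues at `i` and each `wᵢ`, and
any primitive `h` of `f` satisfies `{h,τ} = 2π²((12n+7)/6)² E₄(τ)`. -/
theorem solution_12n_plus_7 (n : ℕ) (x : Fin n → ℝ) (w : Fin n → ℂ)
    (hx : ∀ i, x i ∈ Set.Ioo (0 : ℝ) 1) (hinj : Function.Injective x)
    (hsys : ∀ i, 4 / x i + 9 / (x i - 1) +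
      ∑ j ∈ Finset.univ.erase i, 12 / (x j - x i) = 0)
    (hw : ∀ i, 0 < (w i).im) (hJw : ∀ i, J (w i) = (x i : ℂ)) :
    (∀ τ : ℂ, 0 < τ.im → J τ ≠ 1 → (∀ i, J τ ≠ (x i : ℂ)) →
      DifferentiableAt ℂ (f7 n x) τ ∧ f7 n x τ ≠ 0) ∧
    (Tendsto
      (fun τ : ℂ => deriv (fun z : ℂ => (z - Complex.I) ^ 2 * f7 n x z) τ)
      (𝓝[≠] Complex.I) (𝓝 0) ∧
     ∀ i, Tendsto
      (fun τ : ℂ => deriv (fun z : ℂ => (z - w i) ^ 2 * f7 n x z) τ)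
      (𝓝[≠] w i) (𝓝 0)) ∧
    (∀ τ : ℂ, 0 < τ.im → J τ ≠ 1 → (∀ i, J τ ≠ (x i : ℂ)) →
      deriv (fun z : ℂ => deriv (f7 n x) z / f7 n x z) τ -
        1 / 2 * (deriv (f7 n x) τ / f7 n x τ) ^ 2 =
        2 * (Real.pi : ℂ) ^ 2 * ((12 * (n : ℂ) + 7) / 6) ^ 2 * E4 τ) := by
  have hstieltjes :=
    stieltjes_system_of_reversed strictAntiOn_externalField_4_9 (by norm_num) hx hinj hsys
  obtain ⟨hdiff, hres, hschwarz⟩ := solution_12n_plus_7_general (fun i ↦ (x i : ℂ))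
    (ofReal_injective.comp hinj) (fun i ↦ ofReal_ne_zero.mpr (hx i).1.ne')
    (fun i ↦ ofReal_ne_one.mpr (hx i).2.ne) fun i ↦ by exact_mod_cast hstieltjes i
  rw [f7_eq_etaQuotient]
  rw [Fintype.card_fin] at hschwarz
  exact ⟨hdiff, ⟨hres I (by simp) (.inl J_I), fun i ↦ hres (w i) (hw i) (.inr ⟨i, hJw i⟩)⟩,
    hschwarz⟩
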